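/- For all dyadic intervals I, J ⊆ ℝ, ∫_{ℂ_+} F_I(x+iy) \overline{F_J(x+iy)} y dx dy = |I| if I = J, and = 0 if I ≠ J, where ℂ_+ = {x+iy : x ∈ ℝ, y > 0}. -/

import Mathlib

open MeasureTheory Complex Real
open scoped FourierTransform

noncomputable section

/-- The length `|I| = 2^{-j}` of a dyadic interval of generation `j`. -/
def len (j : ℤ) : ℝ := (2 : ℝ) ^ (-j)

/-- The center `C_I = 2^{-j}(k + 1/2)` of the dyadic interval `I = [2^{-j}k, 2^{-j}(k+1))`. -/
def ctr (j k : ℤ) : ℝ := (2 : ℝ) ^ (-j) * ((k : ℝ) + 1 / 2)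

/-- `ψ_I(x) = |I|^{-1/2} ψ((x - C_I)/|I|)`. -/
def psiI (ψ : SchwartzMap ℝ ℂ) (j k : ℤ) (x : ℝ) : ℂ :=
  (((Real.sqrt (len j))⁻¹ : ℝ) : ℂ) * ψ ((x - ctr j k) / len j)

/-- The Poisson extension to the upper half-plane of `f_I = |I|^{1/2} D ψ_I`, where `D` is the
Fourier multiplier with symbol `4π|ξ|`:
`F_I(x+iy) = ∫ 4π|ξ| |I|^{1/2} ψ̂_I(ξ) e^{-2π|ξ|y} e^{2πixξ} dξ`. -/
def FI (ψ : SchwartzMap ℝ ℂ) (j k : ℤ) (x y : ℝ) : ℂ :=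
  ∫ ξ : ℝ, ((4 * π * |ξ| * Real.sqrt (len j) * Real.exp (-(2 * π * |ξ| * y)) : ℝ) : ℂ) *
    𝓕 (psiI ψ j k) ξ * Complex.exp (2 * (π : ℂ) * Complex.I * (x : ℂ) * (ξ : ℂ))

/-- The periodization `G_I(x+iy) = Σ_{k∈ℤ} F_I(x-k+iy)`. -/
def GI (ψ : SchwartzMap ℝ ℂ) (j k : ℤ) (x y : ℝ) : ℂ :=
  ∑' m : ℤ, FI ψ j k (x - (m : ℝ)) y

/-!
By Plancherel on each horizontal line, the `x`-integral of `F_I \overline{F_J} y` is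
`|I|^{1/2} |J|^{1/2}` times the integral of `16π²|ξ|² y e^{-4π|ξ|y}` against `ψ̂_I \overline{ψ̂_J}`.
The factor `16π²|ξ|² y e^{-4π|ξ|y}` is positive and its `y`-integral is `1` at every `ξ ≠ 0`, so
Fubini and a second use of Plancherel leave `|I|^{1/2} |J|^{1/2} ⟨ψ_I, ψ_J⟩`. Plancherel for
integrable `L²` functions avoids any smoothness at the origin, where the symbol `|ξ|` is singular.
-/

section Plancherel

variable {V : Type*} [NormedAddCommGroup V] [InnerProductSpace ℝ V] [FiniteDimensional ℝ V]
  [MeasurableSpace V] [BorelSpace V]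

theorem integral_fourier_schwartzMap_smul {E : Type*} [NormedAddCommGroup E] [NormedSpace ℂ E]
    [CompleteSpace E] {f : V → E} (φ : SchwartzMap V ℂ) (hf : Integrable f) :
    ∫ ξ, 𝓕 φ ξ • f ξ = ∫ x, φ x • 𝓕 f x := by
  simpa using! VectorFourier.integral_fourierIntegral_smul_eq_flip (L := innerₗ V)
    continuous_fourierChar continuous_inner φ.integrable hf

variable {H : Type*} [NormedAddCommGroup H] [InnerProductSpace ℂ H] [CompleteSpace H] {f g : V → H}

theorem integral_schwartzMap_smul_fourier_toLp (φ : SchwartzMap V ℂ) (hf : Integrable f)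
    (hf₂ : MemLp f 2) :
    ∫ x, φ x • (𝓕 (hf₂.toLp f) : Lp H 2) x = ∫ x, φ x • 𝓕 f x := by
  calc ∫ x, φ x • (𝓕 (hf₂.toLp f) : Lp H 2 volume) x
      = Lp.toTemperedDistribution (μ := volume) (𝓕 (hf₂.toLp f)) φ := by
        rw [Lp.toTemperedDistribution_apply (μ := volume)]
    _ = 𝓕 (Lp.toTemperedDistribution (μ := volume) (hf₂.toLp f)) φ := by
        rw [Lp.fourier_toTemperedDistribution_eq]
    _ = ∫ ξ, 𝓕 φ ξ • hf₂.toLp f ξ := by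
        rw [TemperedDistribution.fourier_apply, Lp.toTemperedDistribution_apply (μ := volume)]
    _ = ∫ ξ, 𝓕 φ ξ • f ξ :=
        integral_congr_ae (hf₂.coeFn_toLp.mono fun ξ hξ ↦ congrArg (𝓕 φ ξ • ·) hξ)
    _ = ∫ x, φ x • 𝓕 f x := integral_fourier_schwartzMap_smul φ hf

theorem coeFn_fourier_toLp_two (hf : Integrable f) (hf₂ : MemLp f 2) :
    (𝓕 (hf₂.toLp f) : Lp H 2) =ᵐ[volume] 𝓕 f := by
  have hcont : Continuous (𝓕 f) :=
    VectorFourier.fourierIntegral_continuous continuous_fourierChar continuous_inner hf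
  refine ae_eq_of_integral_contDiff_smul_eq ((Lp.memLp _).locallyIntegrable one_le_two)
    hcont.locallyIntegrable fun φ hφ hφc ↦ ?_
  let Φ : SchwartzMap V ℂ :=
    (hφc.comp_left Complex.ofReal_zero).toSchwartzMap (Complex.ofRealCLM.contDiff.comp hφ)
  simpa [Φ] using! integral_schwartzMap_smul_fourier_toLp Φ hf hf₂

theorem integral_inner_fourier_fourier (hf : Integrable f) (hf₂ : MemLp f 2)
    (hg : Integrable g) (hg₂ : MemLp g 2) :
    ∫ ξ, inner ℂ (𝓕 f ξ) (𝓕 g ξ) = ∫ x, inner ℂ (f x) (g x) := by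
  calc ∫ ξ, inner ℂ (𝓕 f ξ) (𝓕 g ξ)
      = inner ℂ (𝓕 (hf₂.toLp f)) (𝓕 (hg₂.toLp g)) := by
        rw [L2.inner_def]
        refine integral_congr_ae ?_
        filter_upwards [coeFn_fourier_toLp_two hf hf₂, coeFn_fourier_toLp_two hg hg₂]
          with ξ hfξ hgξ
        rw [hfξ, hgξ]
    _ = inner ℂ (hf₂.toLp f) (hg₂.toLp g) := Lp.inner_fourier_eq _ _
    _ = ∫ x, inner ℂ (f x) (g x) := by
        rw [L2.inner_def]
        refine integral_congr_ae ?_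
        filter_upwards [hf₂.coeFn_toLp, hg₂.coeFn_toLp] with x hfx hgx
        rw [hfx, hgx]

theorem integral_inner_fourierInv_fourierInv (hf : Integrable f) (hf₂ : MemLp f 2)
    (hg : Integrable g) (hg₂ : MemLp g 2) :
    ∫ x, inner ℂ (𝓕⁻ f x) (𝓕⁻ g x) = ∫ ξ, inner ℂ (f ξ) (g ξ) := by
  simp_rw [Real.fourierInv_eq_fourier_neg]
  rw [integral_neg_eq_self (fun x ↦ inner ℂ (𝓕 f x) (𝓕 g x)),
    integral_inner_fourier_fourier hf hf₂ hg hg₂]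

end Plancherel

section PoissonSymbol

theorem integral_self_mul_exp_neg_mul_Ioi {c : ℝ} (hc : 0 < c) :
    ∫ y in Set.Ioi 0, y * Real.exp (-(c * y)) = (c ^ 2)⁻¹ := by
  simpa [show (2 : ℝ) - 1 = 1 by norm_num] using
    Real.integral_rpow_mul_exp_neg_mul_Ioi two_pos hc

theorem integrableOn_pow_mul_exp_neg_mul_Ioi (n : ℕ) {c : ℝ} (hc : 0 < c) :
    IntegrableOn (fun t ↦ t ^ n * Real.exp (-(c * t))) (Set.Ioi 0) := by
  simpa using integrableOn_rpow_mul_exp_neg_mul_rpow (p := 1) (s := n)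
    (neg_one_lt_zero.trans_le n.cast_nonneg) one_pos hc

variable {V : Type*} [NormedAddCommGroup V]

/-- The symbol `4π‖ξ‖ e^{-2π‖ξ‖y}` of the multiplier `D` followed by Poisson extension to
height `y`. -/
def poissonSymbol (y : ℝ) (ξ : V) : ℝ :=
  4 * π * ‖ξ‖ * Real.exp (-(2 * π * ‖ξ‖ * y))

theorem continuous_uncurry_poissonSymbol :
    Continuous (Function.uncurry (poissonSymbol : ℝ → V → ℝ)) := by
  unfold Function.uncurry poissonSymbol
  fun_prop

theorem continuous_poissonSymbol (y : ℝ) : Continuous (poissonSymbol y : V → ℝ) :=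
  continuous_uncurry_poissonSymbol.comp (by fun_prop : Continuous fun ξ : V ↦ (y, ξ))

theorem poissonSymbol_nonneg (y : ℝ) (ξ : V) : 0 ≤ poissonSymbol y ξ := by
  unfold poissonSymbol
  positivity

theorem poissonSymbol_sq (y : ℝ) (ξ : V) :
    poissonSymbol y ξ ^ 2 = 16 * π ^ 2 * (‖ξ‖ ^ 2 * Real.exp (-(4 * π * y * ‖ξ‖))) := by
  have hexp : Real.exp (-(2 * π * ‖ξ‖ * y)) ^ 2 = Real.exp (-(4 * π * y * ‖ξ‖)) := by
    rw [← Real.exp_nat_mul]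
    ring_nf
  rw [poissonSymbol, mul_pow, hexp]
  ring

theorem poissonSymbol_le {y : ℝ} (hy : 0 < y) (ξ : V) : poissonSymbol y ξ ≤ 2 / y := by
  rw [le_div_iff₀ hy]
  calc poissonSymbol y ξ * y
      = 2 * (2 * π * ‖ξ‖ * y * Real.exp (-(2 * π * ‖ξ‖ * y))) := by
        rw [poissonSymbol]
        ring
    _ ≤ 2 * Real.exp (-1) := by gcongr; exact Real.mul_exp_neg_le_exp_neg_one _
    _ ≤ 2 := by linarith [Real.exp_le_one_iff.2 (neg_one_lt_zero (R := ℝ)).le]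

theorem mul_poissonSymbol_sq_eq (y : ℝ) (ξ : V) : y * poissonSymbol y ξ ^ 2 =
    (4 * π * ‖ξ‖) ^ 2 * (y * Real.exp (-(4 * π * ‖ξ‖ * y))) := by
  rw [poissonSymbol_sq, mul_right_comm (4 * π) y]
  ring

theorem integrableOn_mul_poissonSymbol_sq {ξ : V} (hξ : ξ ≠ 0) :
    IntegrableOn (fun y ↦ y * poissonSymbol y ξ ^ 2) (Set.Ioi 0) := by
  have hc : 0 < 4 * π * ‖ξ‖ := by positivity
  simp_rw [mul_poissonSymbol_sq_eq]
  simpa only [pow_one] using! (integrableOn_pow_mul_exp_neg_mul_Ioi 1 hc).const_mul _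

theorem integral_mul_poissonSymbol_sq {ξ : V} (hξ : ξ ≠ 0) :
    ∫ y in Set.Ioi 0, y * poissonSymbol y ξ ^ 2 = 1 := by
  have hc : 0 < 4 * π * ‖ξ‖ := by positivity
  simp_rw [mul_poissonSymbol_sq_eq]
  rw [integral_const_mul, integral_self_mul_exp_neg_mul_Ioi hc, mul_inv_cancel₀ (by positivity)]

variable [MeasurableSpace V] [BorelSpace V]

theorem memLp_top_poissonSymbol {y : ℝ} (hy : 0 < y) (μ : Measure V) :
    MemLp (poissonSymbol y) ⊤ μ :=
  memLp_top_of_bound (continuous_poissonSymbol y).aestronglyMeasurable (2 / y) <|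
    .of_forall fun ξ ↦ by
      rw [Real.norm_of_nonneg (poissonSymbol_nonneg y ξ)]
      exact poissonSymbol_le hy ξ

variable [NormedSpace ℝ V] [FiniteDimensional ℝ V] [Nontrivial V]
  (μ : Measure V) [μ.IsAddHaarMeasure]

theorem integrable_norm_pow_mul_exp_neg_mul_norm (n : ℕ) {c : ℝ} (hc : 0 < c) :
    Integrable (fun ξ : V ↦ ‖ξ‖ ^ n * Real.exp (-(c * ‖ξ‖))) μ := by
  refine (integrable_fun_norm_addHaar μ (f := fun t ↦ t ^ n * Real.exp (-(c * t)))).2 ?_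
  simpa only [smul_eq_mul, ← mul_assoc, ← pow_add] using
    integrableOn_pow_mul_exp_neg_mul_Ioi (Module.finrank ℝ V - 1 + n) hc

theorem memLp_two_poissonSymbol {y : ℝ} (hy : 0 < y) : MemLp (poissonSymbol y) 2 μ := by
  rw [memLp_two_iff_integrable_sq (continuous_poissonSymbol y).aestronglyMeasurable]
  simp_rw [poissonSymbol_sq]
  exact (integrable_norm_pow_mul_exp_neg_mul_norm μ 2 (by positivity)).const_mul _

end PoissonSymbol

theorem integrable_inner_of_memLp_two {𝕜 α H : Type*} [RCLike 𝕜] [MeasurableSpace α]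
    {μ : Measure α} [NormedAddCommGroup H] [InnerProductSpace 𝕜 H] {f g : α → H}
    (hf : MemLp f 2 μ) (hg : MemLp g 2 μ) : Integrable (fun a ↦ inner 𝕜 (f a) (g a)) μ := by
  refine (L2.integrable_inner (hf.toLp f) (hg.toLp g)).congr ?_
  filter_upwards [hf.coeFn_toLp, hg.coeFn_toLp] with a hfa hga
  rw [hfa, hga]

section PoissonExtension

variable {V : Type*} [NormedAddCommGroup V] [InnerProductSpace ℝ V] [FiniteDimensional ℝ V]
  [MeasurableSpace V] [BorelSpace V]

/-- The Poisson extension of `D u`, evaluated at the point `x` of the boundary and height `y`,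
as a function of the Fourier transform `P` of `u`. -/
def poissonExtension {E : Type*} [NormedAddCommGroup E] [NormedSpace ℂ E] (P : V → E) (x : V)
    (y : ℝ) : E :=
  𝓕⁻ (fun ξ ↦ poissonSymbol y ξ • P ξ) x

variable [Nontrivial V] {H : Type*} [NormedAddCommGroup H] [InnerProductSpace ℂ H] {P Q : V → H}

theorem integral_inner_poissonExtension [CompleteSpace H] (hP : MemLp P 2) (hQ : MemLp Q 2)
    {y : ℝ} (hy : 0 < y) :
    ∫ x, inner ℂ (poissonExtension P x y) (poissonExtension Q x y) =
      ∫ ξ, (poissonSymbol y ξ ^ 2) • inner ℂ (P ξ) (Q ξ) := by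
  have hint : ∀ {R : V → H}, MemLp R 2 → Integrable fun ξ ↦ poissonSymbol y ξ • R ξ :=
    fun hR ↦ memLp_one_iff_integrable.1 (hR.smul (𝕜 := ℝ) (memLp_two_poissonSymbol volume hy))
  have hmem : ∀ {R : V → H}, MemLp R 2 → MemLp (fun ξ ↦ poissonSymbol y ξ • R ξ) 2 :=
    fun hR ↦ hR.smul (𝕜 := ℝ) (memLp_top_poissonSymbol hy volume)
  simp only [poissonExtension]
  rw [integral_inner_fourierInv_fourierInv (hint hP) (hmem hP) (hint hQ) (hmem hQ)]
  simp only [inner_smul_left_eq_smul, inner_smul_right_eq_smul, smul_smul, sq]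

theorem integrable_mul_poissonSymbol_sq_smul_inner (hP : MemLp P 2) (hQ : MemLp Q 2) :
    Integrable (fun z : ℝ × V ↦ (z.1 * poissonSymbol z.1 z.2 ^ 2) • inner ℂ (P z.2) (Q z.2))
      ((volume.restrict (Set.Ioi 0)).prod volume) := by
  have hinner := integrable_inner_of_memLp_two (𝕜 := ℂ) hP hQ
  have hmeas : AEStronglyMeasurable
      (fun z : ℝ × V ↦ (z.1 * poissonSymbol z.1 z.2 ^ 2) • inner ℂ (P z.2) (Q z.2))
      ((volume.restrict (Set.Ioi 0)).prod volume) :=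
    (continuous_fst.mul (continuous_uncurry_poissonSymbol.pow 2)).aestronglyMeasurable.smul
      hinner.aestronglyMeasurable.comp_snd
  refine (integrable_prod_iff' hmeas).2 ⟨?_, hinner.norm.congr ?_⟩
  · filter_upwards [Measure.ae_ne volume (0 : V)] with ξ hξ
    exact (integrableOn_mul_poissonSymbol_sq hξ).smul_const _
  · filter_upwards [Measure.ae_ne volume (0 : V)] with ξ hξ
    calc ‖inner ℂ (P ξ) (Q ξ)‖
        = ∫ y in Set.Ioi 0, y * poissonSymbol y ξ ^ 2 * ‖inner ℂ (P ξ) (Q ξ)‖ := by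
          rw [integral_mul_const, integral_mul_poissonSymbol_sq hξ, one_mul]
      _ = ∫ y in Set.Ioi 0, ‖(y * poissonSymbol y ξ ^ 2) • inner ℂ (P ξ) (Q ξ)‖ := by
          refine setIntegral_congr_fun measurableSet_Ioi fun y (hy : 0 < y) ↦ ?_
          rw [norm_smul, Real.norm_of_nonneg (by positivity)]

theorem integral_mul_poissonSymbol_sq_smul_inner (hP : MemLp P 2) (hQ : MemLp Q 2) :
    ∫ y in Set.Ioi 0, ∫ ξ, (y * poissonSymbol y ξ ^ 2) • inner ℂ (P ξ) (Q ξ) =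
      ∫ ξ, inner ℂ (P ξ) (Q ξ) := by
  rw [integral_integral_swap (integrable_mul_poissonSymbol_sq_smul_inner hP hQ)]
  refine integral_congr_ae ?_
  filter_upwards [Measure.ae_ne volume (0 : V)] with ξ hξ
  rw [integral_smul_const, integral_mul_poissonSymbol_sq hξ, one_smul]

theorem integral_smul_inner_poissonExtension [CompleteSpace H] (hP : MemLp P 2)
    (hQ : MemLp Q 2) :
    ∫ y in Set.Ioi 0, ∫ x, y • inner ℂ (poissonExtension P x y) (poissonExtension Q x y) =
      ∫ ξ, inner ℂ (P ξ) (Q ξ) := by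
  rw [← integral_mul_poissonSymbol_sq_smul_inner hP hQ]
  refine setIntegral_congr_fun measurableSet_Ioi fun y hy ↦ ?_
  simp only [mul_smul, integral_smul, integral_inner_poissonExtension hP hQ hy]

end PoissonExtension

section Dyadic

theorem len_pos (j : ℤ) : 0 < len j :=
  zpow_pos two_pos _

variable (ψ : SchwartzMap ℝ ℂ) (j k j' k' : ℤ)

/-- `psiI ψ j k` bundled as a Schwartz function. -/
def psiISchwartz : SchwartzMap ℝ ℂ :=
  (((√(len j))⁻¹ : ℝ) : ℂ) • SchwartzMap.compSubConstCLM ℂ (ctr j k)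
    (SchwartzMap.compCLMOfContinuousLinearEquiv ℂ
      (.unitsEquivAut ℝ (Units.mk0 (len j)⁻¹ (inv_ne_zero (len_pos j).ne'))) ψ)

theorem coe_psiISchwartz : ⇑(psiISchwartz ψ j k) = psiI ψ j k := by
  ext x
  simp [psiISchwartz, psiI, div_eq_mul_inv]

theorem memLp_two_fourier_psiI : MemLp (𝓕 (psiI ψ j k)) 2 := by
  rw [← coe_psiISchwartz, ← SchwartzMap.fourier_coe]
  exact (𝓕 (psiISchwartz ψ j k)).memLp 2

theorem integral_inner_fourier_psiI :
    ∫ ξ, inner ℂ (𝓕 (psiI ψ j' k') ξ) (𝓕 (psiI ψ j k) ξ) =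
      ∫ x, psiI ψ j k x * starRingEnd ℂ (psiI ψ j' k' x) := by
  simp_rw [← coe_psiISchwartz, ← SchwartzMap.fourier_coe]
  exact SchwartzMap.integral_inner_fourier_fourier _ _

theorem FI_eq_sqrt_len_mul_poissonExtension (x y : ℝ) :
    FI ψ j k x y = √(len j) * poissonExtension (𝓕 (psiI ψ j k)) x y := by
  rw [FI, poissonExtension, Real.fourierInv_eq', ← integral_const_mul]
  congr 1 with ξ
  simp only [poissonSymbol, Real.norm_eq_abs, RCLike.inner_apply, smul_eq_mul, Complex.real_smul,
    conj_trivial]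
  push_cast
  ring_nf

theorem integral_FI_mul_conj_FI :
    ∫ y in Set.Ioi (0 : ℝ), ∫ x : ℝ,
        FI ψ j k x y * starRingEnd ℂ (FI ψ j' k' x y) * (y : ℂ) =
      (√(len j) * √(len j') : ℂ) * ∫ x, psiI ψ j k x * starRingEnd ℂ (psiI ψ j' k' x) := by
  rw [← integral_inner_fourier_psiI, ← integral_smul_inner_poissonExtension
    (memLp_two_fourier_psiI ψ j' k') (memLp_two_fourier_psiI ψ j k)]
  simp only [← integral_const_mul, FI_eq_sqrt_len_mul_poissonExtension, RCLike.inner_apply,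
    Complex.real_smul, map_mul, Complex.conj_ofReal]
  congr! 4
  ring

theorem stmt_8_general
    (horth : ∀ j k j' k' : ℤ,
      (∫ x : ℝ, psiI ψ j k x * (starRingEnd ℂ) (psiI ψ j' k' x)) =
        if j = j' ∧ k = k' then 1 else 0) :
    ∀ j k j' k' : ℤ,
      (∫ y in Set.Ioi (0 : ℝ), ∫ x : ℝ,
          FI ψ j k x y * (starRingEnd ℂ) (FI ψ j' k' x y) * ((y : ℝ) : ℂ))
        = if j = j' ∧ k = k' then ((len j : ℝ) : ℂ) else 0 := by
  intro j k j' k'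
  rw [integral_FI_mul_conj_FI, horth]
  split_ifs with h
  · rw [← h.1, ← Complex.ofReal_mul, Real.mul_self_sqrt (len_pos j).le, mul_one]
  · rw [mul_zero]

end Dyadic

/-- Littlewood–Paley orthogonality: for all dyadic intervals `I, J ⊆ ℝ`,
`∫_{ℂ_+} F_I \overline{F_J} y dx dy = |I| δ_{IJ}`. -/
theorem stmt_8 (ψ : SchwartzMap ℝ ℂ)
    (hsupp : Function.support (𝓕 ⇑ψ) ⊆
      Set.Icc (-(4 / 3) : ℝ) (-(1 / 3)) ∪ Set.Icc (1 / 3) (4 / 3))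
    (horth : ∀ j k j' k' : ℤ,
      (∫ x : ℝ, psiI ψ j k x * (starRingEnd ℂ) (psiI ψ j' k' x)) =
        if j = j' ∧ k = k' then 1 else 0) :
    ∀ j k j' k' : ℤ,
      (∫ y in Set.Ioi (0 : ℝ), ∫ x : ℝ,
          FI ψ j k x y * (starRingEnd ℂ) (FI ψ j' k' x y) * ((y : ℝ) : ℂ))
        = if j = j' ∧ k = k' then ((len j : ℝ) : ℂ) else 0 := by
  exact stmt_8_general ψ horth
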